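/- arXiv:2505.04951 — 3 statements merged into one kernel-verified Lean document; each statement's English description precedes it below -/
import Mathlib

section
/- For every integer n ≥ 3, the averaged prime gap satisfies ḡ_n < ln n. -/
open Finset Real

/-- `nthPrime n` is the n-th prime number with 1-based indexing:
`nthPrime 1 = 2`, `nthPrime 2 = 3`, `nthPrime 3 = 5`, ... -/
noncomputable def nthPrime (n : ℕ) : ℕ := Nat.nth Nat.Prime (n - 1)

/-- The arithmetic average of the first `n` primes. -/
noncomputable def avgPrime (n : ℕ) : ℝ := (1 / (n : ℝ)) * ∑ i ∈ Finset.Icc 1 n, (nthPrime i : ℝ)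

/-- The gap in the averaged primes. -/
noncomputable def avgGap (n : ℕ) : ℝ := avgPrime (n + 1) - avgPrime n

/-- The averaged-prime counting function `π̄(x) = #{i ≥ 1 : p̄_i ≤ x}`. -/
noncomputable def avgPrimeCount (x : ℝ) : ℕ := Nat.card {i : ℕ | 1 ≤ i ∧ avgPrime i ≤ x}

/-- The ordinary prime counting function for a real argument. -/
noncomputable def primeCount (x : ℝ) : ℕ := Nat.card {q : ℕ | q.Prime ∧ (q : ℝ) ≤ x}


/-- force evaluation of a natural number -/
def forceN {α : Type} (n : ℕ) (f : ℕ → α) : α := Nat.rec (f 0) (fun k _ => f (k+1)) n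

theorem forceN_eq {α : Type} (n : ℕ) (f : ℕ → α) : forceN n f = f n := by
  cases n <;> rfl

/-- search loop -/
def loopN (P c' S' : ℕ) : ℕ → ℕ → ℕ → ℕ → Bool :=
  fun fuel => Nat.rec (fun _ c S => (Nat.beq c c').and (Nat.beq S S'))
    (fun _ ih m c S =>
      Bool.rec (forceN (m+1) fun m' => ih m' c S)
        (Bool.rec false
          (forceN (m+1) fun m' => forceN (c+1) fun c1 => forceN (S+m) fun S1 => ih m' c1 S1)
          ((Nat.ble c 2).or (Nat.ble (c*m*8000+1) (S*8000 + c*(c+1)*693*(Nat.log2 (c^8))))))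
        (Nat.beq (Nat.gcd m P) 1)) fuel


theorem coprime_iff_prime {k m : ℕ} (h1 : k < m) (h2 : m < (k+1)^2) (h3 : 1 < m) :
    Nat.gcd m (Nat.factorial k) = 1 ↔ m.Prime := by
  constructor
  · intro h
    by_contra hp
    have hle : m.minFac ^ 2 ≤ m := Nat.minFac_sq_le_self (by omega) hp
    have hk : m.minFac ≤ k := by
      by_contra hc
      have : (k+1)^2 ≤ m.minFac^2 := Nat.pow_le_pow_left (by omega) 2
      omega
    have hd : m.minFac ∣ Nat.gcd m (Nat.factorial k) :=
      Nat.dvd_gcd (Nat.minFac_dvd m) (Nat.dvd_factorial (Nat.minFac_pos m) hk)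
    rw [h] at hd
    have := Nat.minFac_prime (n := m) (by omega)
    exact this.one_lt.ne' (Nat.dvd_one.1 hd)
  · intro hp
    exact (Nat.Prime.coprime_iff_not_dvd hp).2 (fun h => by
      have := (Nat.Prime.dvd_factorial hp).1 h
      omega)

theorem loopN_succ (P c' S' fuel m c S : ℕ) : loopN P c' S' (fuel+1) m c S =
    bif (Nat.beq (Nat.gcd m P) 1) then
      (bif ((Nat.ble c 2).or (Nat.ble (c*m*8000+1) (S*8000 + c*(c+1)*693*(Nat.log2 (c^8)))))
        then loopN P c' S' fuel (m+1) (c+1) (S+m) else false)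
    else loopN P c' S' fuel (m+1) c S := by
  have h : loopN P c' S' (fuel+1) m c S =
      Bool.rec (forceN (m+1) fun m' => loopN P c' S' fuel m' c S)
        (Bool.rec false
          (forceN (m+1) fun m' => forceN (c+1) fun c1 => forceN (S+m) fun S1 =>
            loopN P c' S' fuel m' c1 S1)
          ((Nat.ble c 2).or (Nat.ble (c*m*8000+1) (S*8000 + c*(c+1)*693*(Nat.log2 (c^8))))))
        (Nat.beq (Nat.gcd m P) 1) := rfl
  rw [h]
  simp only [forceN_eq]
  cases (Nat.beq (Nat.gcd m P) 1)
  · rfl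
  · cases ((Nat.ble c 2).or (Nat.ble (c*m*8000+1) (S*8000 + c*(c+1)*693*(Nat.log2 (c^8)))))
    · rfl
    · rfl

/-- sum of the first primes -/
noncomputable def sumP (n : ℕ) : ℕ := ∑ i ∈ range n, Nat.nth Nat.Prime i

/-- the desired inequality -/
def GoodN (c : ℕ) : Prop :=
  c * Nat.nth Nat.Prime c * 8000 < sumP c * 8000 + c*(c+1)*693*(Nat.log2 (c^8))

theorem loop_sound (k c' S' : ℕ) (fuel : ℕ) : ∀ m c S : ℕ, k < m → 1 < m → m + fuel ≤ (k+1)^2 →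
    c = Nat.count Nat.Prime m → S = sumP c →
    loopN (Nat.factorial k) c' S' fuel m c S = true →
    c' = Nat.count Nat.Prime (m+fuel) ∧ S' = sumP c' ∧ ∀ d, 3 ≤ d → c ≤ d → d < c' → GoodN d := by
  induction fuel with
  | zero =>
    intro m c S _ _ _ hc hS h
    have h' : ((Nat.beq c c') && (Nat.beq S S')) = true := h
    rw [Bool.and_eq_true, Nat.beq_eq, Nat.beq_eq] at h'
    obtain ⟨h1, h2⟩ := h'
    subst h1 h2
    exact ⟨by simpa using hc, hS, fun d _ _ _ => by omega⟩
  | succ fuel ih =>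
    intro m c S hk hm hf hc hS h
    have hcp := coprime_iff_prime hk (by omega) hm
    by_cases hp : m.Prime
    · have hb : Nat.beq (Nat.gcd m (Nat.factorial k)) 1 = true := by
        rw [Nat.beq_eq]; exact hcp.2 hp
      rw [loopN_succ, hb] at h
      have hnth : Nat.nth Nat.Prime c = m := by rw [hc]; exact Nat.nth_count hp
      cases hcond : (Nat.ble c 2).or (Nat.ble (c*m*8000+1) (S*8000 + c*(c+1)*693*(Nat.log2 (c^8)))) with
      | false => rw [hcond] at h; simp at h
      | true =>
        rw [hcond] at h
        have := ih (m+1) (c+1) (S+m) (by omega) (by omega) (by omega)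
          (by rw [Nat.count_succ, if_pos hp, hc])
          (by rw [sumP, sum_range_succ, hnth, hS, sumP]) h
        obtain ⟨h1, h2, h3⟩ := this
        refine ⟨by rw [h1]; congr 1; omega, h2, fun d hd hcd hd' => ?_⟩
        rcases Nat.eq_or_lt_of_le hcd with he | hl
        · subst he
          rw [Bool.or_eq_true, Nat.ble_eq, Nat.ble_eq] at hcond
          rcases hcond with h | h
          · omega
          · unfold GoodN
            rw [hnth, ← hS]; exact h
        · exact h3 d hd hl hd'
    · have hb : Nat.beq (Nat.gcd m (Nat.factorial k)) 1 = false := by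
        rw [← Bool.not_eq_true, Nat.beq_eq]; exact fun h => hp (hcp.1 h)
      rw [loopN_succ, hb] at h
      have := ih (m+1) c S (by omega) (by omega) (by omega)
          (by rw [Nat.count_succ, if_neg hp, hc, add_zero])
          hS h
      obtain ⟨h1, h2, h3⟩ := this
      exact ⟨by rw [h1]; congr 1; omega, h2, h3⟩

theorem chunk_use {k c' S' fuel m c S : ℕ}
    (h : forceN (Nat.factorial k) (fun P => loopN P c' S' fuel m c S) = true)
    (hk : k < m ∧ 1 < m ∧ m + fuel ≤ (k+1)^2)
    (hc : c = Nat.count Nat.Prime m) (hS : S = sumP c) (hg : ∀ d, 3 ≤ d → d < c → GoodN d) :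
    c' = Nat.count Nat.Prime (m+fuel) ∧ S' = sumP c' ∧ ∀ d, 3 ≤ d → d < c' → GoodN d := by
  rw [forceN_eq] at h
  obtain ⟨h1, h2, h3⟩ := loop_sound k c' S' fuel m c S hk.1 hk.2.1 hk.2.2 hc hS h
  refine ⟨h1, h2, fun d hd hd' => ?_⟩
  rcases Nat.lt_or_ge d c with hh | hh
  · exact hg d hd hh
  · exact h3 d hd hh hd'

theorem nth_prime_vals : sumP 2 = 5 := by
  have h0 := Nat.nth_prime_zero_eq_two
  have h1 := Nat.nth_prime_one_eq_three
  rw [sumP, sum_range_succ, sum_range_one, h0, h1]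

theorem small_cases (d : ℕ) (h3 : 3 ≤ d) (hd : d < 10453) : GoodN d := by
  have c0 : 2 = Nat.count Nat.Prime 4 := by decide
  have g0 : ∀ d, 3 ≤ d → d < 2 → GoodN d := fun d _ _ => by omega
  obtain ⟨c1, s1, g1⟩ := chunk_use (k := 3) (c' := 6) (S' := 41) (fuel := 12) (m := 4) (c := 2) (S := 5)
    (by decide +kernel) (by norm_num) c0 nth_prime_vals.symm g0
  obtain ⟨c2, s2, g2⟩ := chunk_use (k := 15) (c' := 54) (S' := 6081) (fuel := 240) (m := 16) (c := 6) (S := 41)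
    (by decide +kernel) (by norm_num) c1 s1 g1
  obtain ⟨c3, s3, g3⟩ := chunk_use (k := 255) (c' := 1229) (S' := 5736396) (fuel := 9744) (m := 256) (c := 54) (S := 6081)
    (by decide +kernel) (by norm_num) c2 s2 g2
  obtain ⟨c4, s4, g4⟩ := chunk_use (k := 255) (c' := 2262) (S' := 21171191) (fuel := 10000) (m := 10000) (c := 1229) (S := 5736396)
    (by decide +kernel) (by norm_num) c3 s3 g3
  obtain ⟨c5, s5, g5⟩ := chunk_use (k := 255) (c' := 3245) (S' := 45675864) (fuel := 10000) (m := 20000) (c := 2262) (S := 21171191)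
    (by decide +kernel) (by norm_num) c4 s4 g4
  obtain ⟨c6, s6, g6⟩ := chunk_use (k := 255) (c' := 4203) (S' := 79170666) (fuel := 10000) (m := 30000) (c := 3245) (S := 45675864)
    (by decide +kernel) (by norm_num) c5 s5 g5
  obtain ⟨c7, s7, g7⟩ := chunk_use (k := 255) (c' := 5133) (S' := 121013308) (fuel := 10000) (m := 40000) (c := 4203) (S := 79170666)
    (by decide +kernel) (by norm_num) c6 s6 g6
  obtain ⟨c8, s8, g8⟩ := chunk_use (k := 255) (c' := 6057) (S' := 171848738) (fuel := 10000) (m := 50000) (c := 5133) (S := 121013308)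
    (by decide +kernel) (by norm_num) c7 s7 g7
  obtain ⟨c9, s9, g9⟩ := chunk_use (k := 255) (c' := 6493) (S' := 199091012) (fuel := 5000) (m := 60000) (c := 6057) (S := 171848738)
    (by decide +kernel) (by norm_num) c8 s8 g8
  obtain ⟨c10, s10, g10⟩ := chunk_use (k := 331) (c' := 6935) (S' := 228890418) (fuel := 5000) (m := 65000) (c := 6493) (S := 199091012)
    (by decide +kernel) (by norm_num) c9 s9 g9
  obtain ⟨c11, s11, g11⟩ := chunk_use (k := 331) (c' := 7837) (S' := 296488208) (fuel := 10000) (m := 70000) (c := 6935) (S := 228890418)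
    (by decide +kernel) (by norm_num) c10 s10 g10
  obtain ⟨c12, s12, g12⟩ := chunk_use (k := 331) (c' := 8713) (S' := 370927314) (fuel := 10000) (m := 80000) (c := 7837) (S := 296488208)
    (by decide +kernel) (by norm_num) c11 s11 g11
  obtain ⟨c13, s13, g13⟩ := chunk_use (k := 331) (c' := 9592) (S' := 454396537) (fuel := 10000) (m := 90000) (c := 8713) (S := 370927314)
    (by decide +kernel) (by norm_num) c12 s12 g12
  obtain ⟨c14, s14, g14⟩ := chunk_use (k := 331) (c' := 10453) (S' := 544815056) (fuel := 10000) (m := 100000) (c := 9592) (S := 454396537)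
    (by decide +kernel) (by norm_num) c13 s13 g13
  exact g14 d h3 hd


open ArithmeticFunction in
theorem log_fact_eq (N n : ℕ) (h : n ≤ N) :
    Real.log (n.factorial) = ∑ d ∈ Icc 1 N, vonMangoldt d * ((n / d : ℕ) : ℝ) := by
  induction n with
  | zero => simp
  | succ n ih =>
    rw [Nat.factorial_succ, Nat.cast_mul, Real.log_mul (by positivity) (by positivity),
      ih (by omega), ← vonMangoldt_sum]
    have hs : ∑ i ∈ (n+1).divisors, vonMangoldt i
        = ∑ d ∈ Icc 1 N, if d ∣ n+1 then vonMangoldt d else 0 := by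
      rw [← Finset.sum_filter]
      apply Finset.sum_congr _ (fun _ _ => rfl)
      ext d
      simp only [Nat.mem_divisors, mem_filter, mem_Icc]
      constructor
      · rintro ⟨h1, _⟩
        have := Nat.le_of_dvd (by omega) h1
        have := Nat.pos_of_dvd_of_pos h1 (by omega)
        exact ⟨⟨by omega, by omega⟩, h1⟩
      · rintro ⟨_, h1⟩
        exact ⟨h1, by omega⟩
    rw [hs, ← Finset.sum_add_distrib]
    apply Finset.sum_congr rfl
    intro d _
    rw [Nat.succ_div]
    split_ifs <;> push_cast <;> ring

/-- Chebyshev's combination of factorials -/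
noncomputable def cheF (k : ℕ) : ℝ := Real.log ((30*k).factorial) + Real.log (k.factorial)
  - Real.log ((15*k).factorial) - Real.log ((10*k).factorial) - Real.log ((6*k).factorial)

/-- the coefficients -/
def cco (y : ℕ) : ℤ := y + (y/30 : ℕ) - (y/2 : ℕ) - (y/3 : ℕ) - (y/5 : ℕ)

open ArithmeticFunction in
theorem cheF_eq (k : ℕ) : cheF k = ∑ d ∈ Icc 1 (30*k), vonMangoldt d * ((cco (30*k/d) : ℤ) : ℝ) := by
  rw [cheF, log_fact_eq (30*k) (30*k) le_rfl, log_fact_eq (30*k) k (by omega),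
    log_fact_eq (30*k) (15*k) (by omega), log_fact_eq (30*k) (10*k) (by omega),
    log_fact_eq (30*k) (6*k) (by omega), ← Finset.sum_add_distrib, ← Finset.sum_sub_distrib,
    ← Finset.sum_sub_distrib, ← Finset.sum_sub_distrib]
  apply Finset.sum_congr rfl
  intro d _
  have h1 : k / d = 30*k/d/30 := by
    rw [Nat.div_div_eq_div_mul, mul_comm d, ← Nat.div_div_eq_div_mul]; congr 1; omega
  have h2 : 15*k / d = 30*k/d/2 := by
    rw [Nat.div_div_eq_div_mul, mul_comm d, ← Nat.div_div_eq_div_mul]; congr 1; omega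
  have h3 : 10*k / d = 30*k/d/3 := by
    rw [Nat.div_div_eq_div_mul, mul_comm d, ← Nat.div_div_eq_div_mul]; congr 1; omega
  have h4 : 6*k / d = 30*k/d/5 := by
    rw [Nat.div_div_eq_div_mul, mul_comm d, ← Nat.div_div_eq_div_mul]; congr 1; omega
  rw [h1, h2, h3, h4, cco]
  simp only [Int.cast_sub, Int.cast_add, Int.cast_natCast]
  ring

theorem cco_bounds (y : ℕ) : 0 ≤ cco y ∧ cco y ≤ 1 := by
  unfold cco; omega

theorem cco_one (y : ℕ) (h : 1 ≤ y) (h' : y < 6) : cco y = 1 := by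
  unfold cco; omega

open ArithmeticFunction in
theorem cheF_le_psi (k : ℕ) : cheF k ≤ Chebyshev.psi ((30*k : ℕ) : ℝ) := by
  rw [cheF_eq, Chebyshev.psi, Nat.floor_natCast]
  have : Icc 1 (30*k) = Ioc 0 (30*k) := by ext; simp; omega
  rw [this]
  apply Finset.sum_le_sum
  intro d _
  have h : ((cco (30*k/d) : ℤ) : ℝ) ≤ 1 := by exact_mod_cast (cco_bounds _).2
  have := vonMangoldt_nonneg (n := d)
  nlinarith

open ArithmeticFunction in
theorem theta_le_cheF (k : ℕ) : Chebyshev.theta ((30*k : ℕ) : ℝ) ≤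
    Chebyshev.theta ((5*k : ℕ) : ℝ) + cheF k := by
  rw [cheF_eq, Chebyshev.theta, Chebyshev.theta, Nat.floor_natCast, Nat.floor_natCast]
  have : Icc 1 (30*k) = Ioc 0 (30*k) := by ext; simp; omega
  rw [this, Finset.sum_filter, Finset.sum_filter]
  have hsub : Ioc 0 (5*k) ⊆ Ioc 0 (30*k) := Finset.Ioc_subset_Ioc_right (by omega)
  have h5 : ∑ a ∈ Ioc 0 (5*k), (if Nat.Prime a then Real.log a else 0)
      = ∑ a ∈ Ioc 0 (30*k), if a ≤ 5*k then (if Nat.Prime a then Real.log a else 0) else 0 := by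
    rw [← Finset.sum_filter (s := Ioc 0 (30*k)) (p := fun a => a ≤ 5*k)]
    apply Finset.sum_congr _ (fun _ _ => rfl)
    ext d; simp only [mem_Ioc, mem_filter]; omega
  rw [h5, ← Finset.sum_add_distrib]
  apply Finset.sum_le_sum
  intro d hd
  rw [mem_Ioc] at hd
  have hv := vonMangoldt_nonneg (n := d)
  have hc : (0:ℝ) ≤ ((cco (30*k/d) : ℤ) : ℝ) := by exact_mod_cast (cco_bounds _).1
  have hm := mul_nonneg hv hc
  by_cases hle : d ≤ 5*k
  · rw [if_pos hle]; linarith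
  · rw [if_neg hle]
    have h1 : 30*k/d < 6 := by rw [Nat.div_lt_iff_lt_mul hd.1]; omega
    have h2 : 1 ≤ 30*k/d := by rw [Nat.le_div_iff_mul_le hd.1]; omega
    rw [cco_one _ h2 h1]
    by_cases hp : d.Prime
    · rw [if_pos hp, vonMangoldt_apply_prime hp]; simp
    · rw [if_neg hp]; simp

theorem logfact_lower (n : ℕ) (h : 1 ≤ n) : n * Real.log n - n ≤ Real.log (n.factorial) := by
  induction n, h using Nat.le_induction with
  | base => simp
  | succ n hn ih =>
    rw [Nat.factorial_succ, Nat.cast_mul, Real.log_mul (by positivity) (by positivity)]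
    have hn' : (1:ℝ) ≤ n := by exact_mod_cast hn
    have h1 : Real.log ((n+1:ℝ)/n) ≤ (n+1)/n - 1 := Real.log_le_sub_one_of_pos (by positivity)
    rw [Real.log_div (by positivity) (by positivity)] at h1
    have h2 : n * (Real.log (n+1) - Real.log n) ≤ 1 := by
      calc _ ≤ n * ((n+1:ℝ)/n - 1) := by gcongr
        _ = 1 := by field_simp; ring
    push_cast
    linarith

theorem logfact_upper (n : ℕ) (h : 1 ≤ n) :
    Real.log (n.factorial) ≤ n * Real.log n - n + Real.log n + 1 := by
  induction n, h using Nat.le_induction with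
  | base => simp
  | succ n hn ih =>
    rw [Nat.factorial_succ, Nat.cast_mul, Real.log_mul (by positivity) (by positivity)]
    have hn' : (1:ℝ) ≤ n := by exact_mod_cast hn
    have h1 : Real.log ((n:ℝ)/(n+1)) ≤ n/(n+1) - 1 := Real.log_le_sub_one_of_pos (by positivity)
    rw [Real.log_div (by positivity) (by positivity)] at h1
    have h2 : (n+1) * (Real.log n - Real.log (n+1)) ≤ -1 := by
      calc _ ≤ (n+1) * ((n:ℝ)/(n+1) - 1) := by gcongr
        _ = -1 := by field_simp; ring
    push_cast
    linarith

theorem beta_lower : (27.6:ℝ) ≤ 14 * Real.log 2 + 9 * Real.log 3 + 5 * Real.log 5 := by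
  have h : (138:ℝ) ≤ Real.log ((2^14*3^9*5^5)^5) := by
    rw [Real.le_log_iff_exp_le (by norm_num)]
    have : Real.exp 138 = Real.exp 1 ^ 138 := by rw [← Real.exp_nat_mul]; norm_num
    rw [this]
    calc Real.exp 1 ^ 138 ≤ 2.7182818286 ^ 138 := by gcongr; exact Real.exp_one_lt_d9.le
      _ ≤ _ := by norm_num
  rw [Real.log_pow, Real.log_mul (by norm_num) (by norm_num), Real.log_mul (by norm_num) (by norm_num),
    Real.log_pow, Real.log_pow, Real.log_pow] at h
  push_cast at h
  linarith

theorem beta_upper : 14 * Real.log 2 + 9 * Real.log 3 + 5 * Real.log 5 ≤ (27.7:ℝ) := by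
  have h : Real.log ((2^14*3^9*5^5)^3) ≤ 83 := by
    rw [Real.log_le_iff_le_exp (by norm_num)]
    have : Real.exp 83 = Real.exp 1 ^ 83 := by rw [← Real.exp_nat_mul]; norm_num
    rw [this]
    calc _ ≤ (2.7182818283:ℝ) ^ 83 := by norm_num
      _ ≤ Real.exp 1 ^ 83 := by gcongr; exact Real.exp_one_gt_d9.le
  rw [Real.log_pow, Real.log_mul (by norm_num) (by norm_num), Real.log_mul (by norm_num) (by norm_num),
    Real.log_pow, Real.log_pow, Real.log_pow] at h
  push_cast at h
  linarith

theorem log_exp_num : (3:ℝ) ≤ Real.log 30 ∧ Real.log 30 ≤ 4 ∧ Real.log 20 ≤ 3 ∧ Real.log 13 ≤ 2.57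
    ∧ 9.2 ≤ Real.log 10000 ∧ Real.log 40 ≤ 3.7 := by
  have e1 := Real.exp_one_gt_d9
  have e2 := Real.exp_one_lt_d9
  have E : ∀ m : ℕ, Real.exp m = Real.exp 1 ^ m := fun m => by rw [← Real.exp_nat_mul]; norm_num
  have up : ∀ m : ℕ, Real.exp m ≤ 2.7182818286 ^ m := fun m => by
    rw [E]; gcongr
  have lo : ∀ m : ℕ, (2.7182818283:ℝ) ^ m ≤ Real.exp m := fun m => by
    rw [E]; gcongr
  refine ⟨?_, ?_, ?_, ?_, ?_, ?_⟩
  · rw [Real.le_log_iff_exp_le (by norm_num)]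
    have := up 3; norm_num at this ⊢; linarith
  · rw [Real.log_le_iff_le_exp (by norm_num)]
    have := lo 4; norm_num at this ⊢; linarith
  · rw [Real.log_le_iff_le_exp (by norm_num)]
    have := lo 3; norm_num at this ⊢; linarith
  · have : Real.log (13^30) ≤ 77 := by
      rw [Real.log_le_iff_le_exp (by norm_num)]
      have := lo 77
      push_cast at this
      refine le_trans ?_ this
      norm_num
    rw [Real.log_pow] at this; push_cast at this; linarith
  · have : 46 ≤ Real.log (10000^5) := by
      rw [Real.le_log_iff_exp_le (by norm_num)]
      have := up 46
      push_cast at this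
      refine le_trans this ?_
      norm_num
    rw [Real.log_pow] at this; push_cast at this; linarith
  · have : Real.log (40^10) ≤ 37 := by
      rw [Real.log_le_iff_le_exp (by norm_num)]
      have := lo 37
      push_cast at this
      refine le_trans ?_ this
      norm_num
    rw [Real.log_pow] at this; push_cast at this; linarith

theorem logs_split : Real.log 30 = Real.log 2 + Real.log 3 + Real.log 5 ∧
    Real.log 15 = Real.log 3 + Real.log 5 ∧ Real.log 10 = Real.log 2 + Real.log 5 ∧
    Real.log 6 = Real.log 2 + Real.log 3 := by
  refine ⟨?_, ?_, ?_, ?_⟩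
  · rw [← Real.log_mul (by norm_num) (by norm_num), ← Real.log_mul (by norm_num) (by norm_num)]; norm_num
  all_goals rw [← Real.log_mul (by norm_num) (by norm_num)]; norm_num

theorem cheF_lower (k : ℕ) (hk : 1 ≤ k) :
    0.92 * ((30*k : ℕ) : ℝ) - 3 * Real.log ((30*k : ℕ) : ℝ) ≤ cheF k := by
  have hk0 : (1:ℝ) ≤ k := by exact_mod_cast hk
  have hk1 : (k:ℝ) ≠ 0 := by positivity
  have a1 := logfact_lower (30*k) (by omega)
  have a2 := logfact_lower k (by omega)
  have a3 := logfact_upper (15*k) (by omega)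
  have a4 := logfact_upper (10*k) (by omega)
  have a5 := logfact_upper (6*k) (by omega)
  push_cast at a1 a2 a3 a4 a5 ⊢
  rw [Real.log_mul (by norm_num) hk1] at a1 a3 a4 a5 ⊢
  obtain ⟨l1, l2, l3, l4⟩ := logs_split
  have hb := beta_lower
  have hc := log_exp_num.1
  have hkb : (k:ℝ) * 27.6 ≤ k * (14 * Real.log 2 + 9 * Real.log 3 + 5 * Real.log 5) := by gcongr
  unfold cheF
  rw [l2] at a3
  rw [l3] at a4
  rw [l4] at a5
  rw [l1] at a1 hc ⊢
  linarith

theorem cheF_upper (k : ℕ) (hk : 1 ≤ k) :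
    cheF k ≤ 27.7 * k + 2 * Real.log k + 6 := by
  have hk0 : (1:ℝ) ≤ k := by exact_mod_cast hk
  have hk1 : (k:ℝ) ≠ 0 := by positivity
  have a1 := logfact_upper (30*k) (by omega)
  have a2 := logfact_upper k (by omega)
  have a3 := logfact_lower (15*k) (by omega)
  have a4 := logfact_lower (10*k) (by omega)
  have a5 := logfact_lower (6*k) (by omega)
  push_cast at a1 a2 a3 a4 a5 ⊢
  rw [Real.log_mul (by norm_num) hk1] at a1 a3 a4 a5
  obtain ⟨l1, l2, l3, l4⟩ := logs_split
  have hb := beta_upper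
  have hc := log_exp_num.2.1
  have hkb : k * (14 * Real.log 2 + 9 * Real.log 3 + 5 * Real.log 5) ≤ (k:ℝ) * 27.7 := by gcongr
  unfold cheF
  rw [l2] at a3
  rw [l3] at a4
  rw [l4] at a5
  rw [l1] at a1 hc
  linarith

theorem theta_upper (N : ℕ) : Chebyshev.theta (N:ℝ) ≤ 1.15 * N + 360 := by
  induction N using Nat.strong_induction_on with
  | _ N ih =>
    rcases Nat.lt_or_ge N 1500 with h | h
    · have h1 := Chebyshev.theta_le_log4_mul_x (x := (N:ℝ)) (by positivity)
      have h4 : Real.log 4 ≤ 1.387 := by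
        have : (4:ℝ) = 2^2 := by norm_num
        rw [this, Real.log_pow]
        have := Real.log_two_lt_d9
        push_cast; linarith
      have h2 : (N:ℝ) ≤ 1500 := by exact_mod_cast h.le
      have h3 : (0:ℝ) ≤ N := by positivity
      nlinarith
    · obtain ⟨k, hk⟩ : ∃ k, k = N/30 + 1 := ⟨_, rfl⟩
      have hN : N ≤ 30*k := by omega
      have hN2 : 30*k ≤ N + 30 := by omega
      have hk2 : 51 ≤ k := by omega
      have h1 : Chebyshev.theta (N:ℝ) ≤ Chebyshev.theta ((30*k:ℕ):ℝ) :=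
        Chebyshev.theta_mono (by exact_mod_cast hN)
      have h2 := theta_le_cheF k
      have h3 := ih (5*k) (by omega)
      have h4 := cheF_upper k (by omega)
      have h5 : (51:ℝ) ≤ k := by exact_mod_cast hk2
      have h6 : 30*(k:ℝ) ≤ N + 30 := by exact_mod_cast hN2
      have h7 : Real.log (k/20:ℝ) ≤ k/20 - 1 := Real.log_le_sub_one_of_pos (by positivity)
      rw [Real.log_div (by positivity) (by norm_num)] at h7
      have h8 := log_exp_num.2.2.1
      have h9 : ((5*k:ℕ):ℝ) = 5*k := by push_cast; ring
      have h10 : 1.15 * ((5*k:ℕ):ℝ) = 5.75*k := by rw [h9]; ring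
      linarith

/-- primes, zero indexed -/
noncomputable abbrev qq (i : ℕ) : ℕ := Nat.nth Nat.Prime i

theorem qq_lower (i : ℕ) : 3 * i ≤ qq i + 8 := by
  have h1 : Nat.primeCounting' (qq i) = i := Nat.primeCounting'_nth_eq i
  rcases Nat.lt_or_ge (qq i) 7 with h | h
  · have : i + 2 ≤ qq i := Nat.add_two_le_nth_prime i
    by_contra hc
    have : i ≤ Nat.primeCounting' 7 := by
      rw [← h1]; exact Nat.monotone_primeCounting' h.le
    have h7 : Nat.primeCounting' 7 = 3 := by decide
    omega
  · obtain ⟨m, hm⟩ := Nat.exists_eq_add_of_le h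
    have h2 := Nat.primeCounting'_add_le (a := 6) (k := 7) (by norm_num) (by norm_num) m
    rw [← hm, h1] at h2
    have h7 : Nat.primeCounting' 7 = 3 := by decide
    have h8 : Nat.totient 6 = 2 := by decide
    rw [h7, h8] at h2
    omega

theorem sumlog_lower (i : ℕ) : i * Real.log i - 150 ≤ ∑ j ∈ range i, Real.log (qq j) := by
  have hpos : ∀ j, 0 ≤ Real.log (qq j) := fun j => Real.log_natCast_nonneg _
  rcases Nat.lt_or_ge i 40 with h | h
  · have h1 : (0:ℝ) ≤ ∑ j ∈ range i, Real.log (qq j) := Finset.sum_nonneg (fun j _ => hpos j)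
    rcases Nat.eq_zero_or_pos i with h0 | h0
    · subst h0; simp
    · have h2 : Real.log i ≤ Real.log 40 := by
        apply Real.log_le_log (by exact_mod_cast h0)
        exact_mod_cast h.le
      have h3 := log_exp_num.2.2.2.2.2
      have h4 : (i:ℝ) ≤ 40 := by exact_mod_cast h.le
      have h5 : (0:ℝ) ≤ i := by positivity
      nlinarith
  · induction i, h using Nat.le_induction with
    | base =>
      have h1 : (0:ℝ) ≤ ∑ j ∈ range 40, Real.log (qq j) := Finset.sum_nonneg (fun j _ => hpos j)
      have h3 := log_exp_num.2.2.2.2.2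
      push_cast
      linarith
    | succ i hi ih =>
      rw [sum_range_succ]
      have hi' : (40:ℝ) ≤ i := by exact_mod_cast hi
      have h1 : Real.log ((i+1:ℝ)/i) ≤ (i+1)/i - 1 := Real.log_le_sub_one_of_pos (by positivity)
      rw [Real.log_div (by positivity) (by positivity)] at h1
      have h2 : i * (Real.log (i+1) - Real.log i) ≤ 1 := by
        calc _ ≤ i * ((i+1:ℝ)/i - 1) := by gcongr
          _ = 1 := by field_simp; ring
      have h3 : Real.log (i+1) + 1 ≤ Real.log (qq i) := by
        have : Real.log (i+1) + 1 = Real.log ((i+1) * Real.exp 1) := by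
          rw [Real.log_mul (by positivity) (by positivity), Real.log_exp]
        rw [this]
        apply Real.log_le_log (by positivity)
        have h4 : 3 * (i:ℝ) ≤ qq i + 8 := by exact_mod_cast qq_lower i
        have := Real.exp_one_lt_d9
        nlinarith
      push_cast
      linarith

theorem sumlog_le_theta (i : ℕ) : ∑ j ∈ range (i+1), Real.log (qq j) ≤ Chebyshev.theta (qq i : ℝ) := by
  have hinj := Nat.nth_injective Nat.infinite_setOfPred_prime
  rw [Chebyshev.theta_eq_sum_primesLE_log]
  have : ∑ j ∈ range (i+1), Real.log (qq j)
      = ∑ p ∈ (range (i+1)).image qq, Real.log (p:ℝ) := by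
    rw [Finset.sum_image (fun a _ b _ h => hinj h)]
  rw [this]
  apply Finset.sum_le_sum_of_subset_of_nonneg
  · intro p hp
    rw [mem_image] at hp
    obtain ⟨j, hj, rfl⟩ := hp
    rw [mem_range] at hj
    rw [Nat.mem_primesLE]
    exact ⟨(Nat.nth_strictMono Nat.infinite_setOfPred_prime).monotone (by omega), Nat.prime_nth_prime j⟩
  · intro p _ _
    exact Real.log_natCast_nonneg _

theorem qq_log_lower (i : ℕ) : ((i+1:ℕ):ℝ) * Real.log ((i+1:ℕ):ℝ) - 510 ≤ 1.15 * (qq i : ℝ) := by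
  have h1 := sumlog_lower (i+1)
  have h2 := sumlog_le_theta i
  have h3 := theta_upper (qq i)
  linarith

theorem sumq_lower (n : ℕ) (hn : 1 ≤ n) : (n:ℝ)^2/2 * Real.log n - (n:ℝ)^2/4 - 510 * n
    ≤ 1.15 * ∑ i ∈ range n, (qq i : ℝ) := by
  induction n, hn using Nat.le_induction with
  | base =>
    have := qq_log_lower 0
    simp at this ⊢
    linarith
  | succ n hn ih =>
    rw [sum_range_succ]
    have h0 := qq_log_lower n
    have hn' : (1:ℝ) ≤ n := by exact_mod_cast hn
    have h1 : Real.log ((n+1:ℝ)/n) ≤ (n+1)/n - 1 := Real.log_le_sub_one_of_pos (by positivity)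
    rw [Real.log_div (by positivity) (by positivity)] at h1
    have h2 : (n:ℝ)^2 * (Real.log (n+1) - Real.log n) ≤ n := by
      calc _ ≤ (n:ℝ)^2 * ((n+1:ℝ)/n - 1) := by gcongr
        _ = n := by field_simp; ring
    have h3 : 0 ≤ Real.log (n+1:ℝ) := Real.log_nonneg (by linarith)
    push_cast at h0 ⊢
    nlinarith

theorem qq_upper (n : ℕ) (hn : 100 ≤ n) :
    0.92 * ((qq n : ℝ) - 29) ≤ (n + 3) * Real.log (qq n) := by
  have hq : n + 2 ≤ qq n := Nat.add_two_le_nth_prime n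
  have hp : (qq n).Prime := Nat.prime_nth_prime n
  obtain ⟨k, hk⟩ : ∃ k, k = qq n / 30 := ⟨_, rfl⟩
  have hk1 : 1 ≤ k := by omega
  have hlt : 30 * k < qq n := by
    rcases Nat.lt_or_ge (30*k) (qq n) with h | h
    · exact h
    · have h2 : 2 ∣ qq n := ⟨15*k, by omega⟩
      have := (Nat.prime_dvd_prime_iff_eq Nat.prime_two hp).1 h2
      omega
  have hge : qq n ≤ 30*k + 29 := by omega
  have h1 := cheF_lower k hk1
  have h2 := cheF_le_psi k
  have h3 := Chebyshev.psi_le_primeCounting_mul_log (30*k)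
  have h4 : Nat.primeCounting (30*k) ≤ n := by
    rw [Nat.primeCounting_eq_primeCounting'_succ]
    calc _ ≤ Nat.primeCounting' (qq n) := Nat.monotone_primeCounting' hlt
      _ = n := Nat.primeCounting'_nth_eq n
  have h4' : ((Nat.primeCounting (30*k) : ℕ):ℝ) ≤ n := by exact_mod_cast h4
  have h5 : 0 ≤ Real.log ((30*k:ℕ):ℝ) := Real.log_natCast_nonneg _
  have h6 : Real.log ((30*k:ℕ):ℝ) ≤ Real.log (qq n) := by
    apply Real.log_le_log
    · exact_mod_cast (by omega : 0 < 30*k)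
    · exact_mod_cast hlt.le
  have h7 : (qq n:ℝ) ≤ ((30*k:ℕ):ℝ) + 29 := by exact_mod_cast hge
  have h8 : ((Nat.primeCounting (30*k) : ℕ):ℝ) * Real.log ((30*k:ℕ):ℝ) ≤ n * Real.log (qq n) := by
    gcongr
  nlinarith

theorem large_cases (n : ℕ) (hn : 10000 ≤ n) :
    n * (qq n : ℝ) < ∑ i ∈ range n, (qq i : ℝ) + n * (n+1) * Real.log n := by
  by_contra hcon
  push Not at hcon
  have hn' : (10000:ℝ) ≤ n := by exact_mod_cast hn
  have hn0 : (0:ℝ) < n := by linarith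
  obtain ⟨-, -, -, l13, l4, -⟩ := log_exp_num
  have hL : 9.2 ≤ Real.log n := l4.trans (Real.log_le_log (by norm_num) hn')
  have hS := sumq_lower n (by omega)
  have hU := qq_upper n (by omega)
  have hq : (n:ℝ) + 2 ≤ qq n := by exact_mod_cast Nat.add_two_le_nth_prime n
  set L := Real.log n with hLdef
  obtain ⟨r, hr⟩ : ∃ r : ℝ, r = qq n / n := ⟨_, rfl⟩
  have hqr : (qq n : ℝ) = n * r := by rw [hr]; field_simp
  have hr1 : 1 ≤ r := by rw [hr, le_div_iff₀ hn0]; linarith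
  have hlogq : Real.log (qq n) = L + Real.log r := by
    rw [hqr, Real.log_mul (by positivity) (by positivity)]
  have hlr : Real.log (r/13) ≤ r/13 - 1 := Real.log_le_sub_one_of_pos (by positivity)
  rw [Real.log_div (by positivity) (by norm_num)] at hlr
  rw [hlogq, hqr] at hU
  rw [hqr] at hcon
  -- lower bound on r
  have hr2 : 1.434 * L - 0.263 ≤ r := by
    have h1 : (n:ℝ)^2 * (1.434 * L - 0.263) ≤ (n:ℝ)^2 * r := by
      nlinarith [mul_nonneg hn0.le (by linarith : (0:ℝ) ≤ n - 10000), mul_nonneg hn0.le (by linarith : (0:ℝ) ≤ L), mul_nonneg (sq_nonneg (n:ℝ)) (by linarith : (0:ℝ) ≤ L)]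
    exact le_of_mul_le_mul_left h1 (by positivity)
  have hX : Real.log r + L ≤ L + r/13 + 1.57 := by linarith
  have hX0 : 0 ≤ L + r/13 + 1.57 := by positivity
  have h3 : (n+3) * (L + Real.log r) ≤ n * (1.0003 * (L + r/13 + 1.57)) := by
    calc _ ≤ (n+3) * (L + r/13 + 1.57) := mul_le_mul_of_nonneg_left (by linarith) (by positivity)
      _ ≤ (n * 1.0003) * (L + r/13 + 1.57) := by gcongr; linarith
      _ = _ := by ring
  have h4 : n * (0.92 * r - 0.003) ≤ n * (1.0003 * (L + r/13 + 1.57)) := by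
    linarith
  have h5 := le_of_mul_le_mul_left h4 hn0
  linarith

theorem good_real (n : ℕ) (hn : 3 ≤ n) (h : GoodN n) :
    n * (qq n : ℝ) < ∑ i ∈ range n, (qq i : ℝ) + n * (n+1) * Real.log n := by
  have h1 : (n:ℝ) * (qq n : ℝ) * 8000 <
      (∑ i ∈ range n, (qq i : ℝ)) * 8000 + n*(n+1)*693*((Nat.log2 (n^8) : ℕ):ℝ) := by
    unfold GoodN sumP at h
    exact_mod_cast h
  have h2 : ((Nat.log2 (n^8) : ℕ):ℝ) * 0.693 ≤ 8 * Real.log n := by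
    have h3 : 2 ^ (Nat.log2 (n^8)) ≤ n^8 := Nat.log2_self_le (by positivity)
    have h4 : ((2:ℝ) ^ (Nat.log2 (n^8))) ≤ (n:ℝ)^8 := by exact_mod_cast h3
    have h5 := Real.log_le_log (by positivity) h4
    rw [Real.log_pow, Real.log_pow] at h5
    have h6 := Real.log_two_gt_d9
    have h7 : (0:ℝ) ≤ ((Nat.log2 (n^8) : ℕ):ℝ) := by positivity
    push_cast at h5
    nlinarith
  have h3 : (0:ℝ) ≤ (n:ℝ) * (n+1) := by positivity
  have h4 := mul_le_mul_of_nonneg_left h2 h3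
  linarith

theorem key_ineq (n : ℕ) (hn : 3 ≤ n) :
    n * (qq n : ℝ) < ∑ i ∈ range n, (qq i : ℝ) + n * (n+1) * Real.log n := by
  rcases Nat.lt_or_ge n 10453 with h | h
  · exact good_real n hn (small_cases n hn h)
  · exact large_cases n (by omega)

theorem sum_nthPrime (n : ℕ) : ∑ i ∈ Finset.Icc 1 n, (nthPrime i : ℝ) = ∑ i ∈ range n, (qq i : ℝ) := by
  induction n with
  | zero => simp
  | succ n ih =>
    rw [Finset.sum_Icc_succ_top (by omega), ih, sum_range_succ]
    simp [nthPrime, qq]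

theorem stmt5 (n : ℕ) (hn : 3 ≤ n) :
    avgGap n < Real.log n := by
  have h := key_ineq n hn
  have hn0 : (0:ℝ) < n := by exact_mod_cast (by omega : 0 < n)
  rw [avgGap, avgPrime, avgPrime, sum_nthPrime, sum_nthPrime, sum_range_succ]
  set S := ∑ i ∈ range n, (qq i : ℝ) with hS
  have e : 1 / ((n+1:ℕ):ℝ) * (S + (qq n : ℝ)) - 1 / (n:ℝ) * S
      = (n * (qq n : ℝ) - S) / (n * (n+1)) := by
    push_cast
    field_simp
    ring
  rw [e, div_lt_iff₀ (by positivity)]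
  linarith
end

section
/- For every integer n ≥ 3, the relative averaged prime gap satisfies ḡ_n / p̄_n > 1/(n·(1 + e^{−1})), where e is Euler's number. -/
open Finset Real

def okc (x n S : ℕ) : Bool :=
  Nat.ble (n * (n + 1) * x * 10000 + 1) ((n * x - S) * (23678 * n + 10000))

def chk (P : ℕ) : ℕ → ℕ → ℕ → ℕ → ℕ → ℕ → Bool
  | 0, _, n, S, n', S' => Nat.beq n n' && Nat.beq S S'
  | k + 1, x, n, S, n', S' =>
    match Nat.beq (Nat.gcd x P) 1 with
    | true => match okc x n S with
      | true => chk P k (x + 1) (n + 1) (S + x) n' S'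
      | false => false
    | false => chk P k (x + 1) n S n' S'

def cntP (x : ℕ) : ℕ := ((Finset.range x).filter Nat.Prime).card
def smP (x : ℕ) : ℕ := ∑ p ∈ (Finset.range x).filter Nat.Prime, p

lemma cntP_succ (x : ℕ) : cntP (x + 1) = cntP x + if x.Prime then 1 else 0 := by
  unfold cntP
  rw [Finset.range_add_one, Finset.filter_insert]
  split_ifs with h
  · rw [Finset.card_insert_of_notMem (by simp)]
  · simp

lemma smP_succ (x : ℕ) : smP (x + 1) = smP x + if x.Prime then x else 0 := by
  unfold smP
  rw [Finset.range_add_one, Finset.filter_insert]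
  split_ifs with h
  · rw [Finset.sum_insert (by simp), add_comm]
  · simp

lemma prime_iff_gcd (P B x : ℕ) (h1 : ∀ q, q.Prime → q ≤ B → q ∣ P)
    (h2 : ∀ q, q.Prime → q ∣ P → q ≤ B) (hx : B < x) (hx1 : 1 < x) (hx2 : x < (B + 1) ^ 2) :
    x.Prime ↔ Nat.gcd x P = 1 := by
  constructor
  · intro h
    rw [← Nat.coprime_iff_gcd_eq_one, h.coprime_iff_not_dvd]
    intro hd
    have := h2 x h hd
    omega
  · intro h
    by_contra hp
    have h3 : x.minFac ^ 2 ≤ x := Nat.minFac_sq_le_self (by omega) hp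
    have h4 : x.minFac.Prime := Nat.minFac_prime (by omega)
    have h5 : x.minFac < B + 1 := lt_of_pow_lt_pow_left₀ 2 (by omega) (lt_of_le_of_lt h3 hx2)
    have h6 := h1 _ h4 (by omega)
    have h7 := Nat.dvd_gcd (Nat.minFac_dvd x) h6
    rw [h] at h7
    exact h4.one_lt.ne' (Nat.dvd_one.mp h7)

lemma chk_sound (P B : ℕ) (h1 : ∀ q, q.Prime → q ≤ B → q ∣ P)
    (h2 : ∀ q, q.Prime → q ∣ P → q ≤ B) (k : ℕ) : ∀ (x n' S' : ℕ), B < x → 1 < x →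
    x + k ≤ (B + 1) ^ 2 → chk P k x (cntP x) (smP x) n' S' = true →
    (∀ y, x ≤ y → y < x + k → y.Prime → okc y (cntP y) (smP y) = true) ∧
      cntP (x + k) = n' ∧ smP (x + k) = S' := by
  induction k with
  | zero =>
    intro x n' S' _ _ _ h
    simp [chk] at h
    exact ⟨fun y _ _ => by omega, h.1, h.2⟩
  | succ k ih =>
    intro x n' S' hB hx hk h
    have key := prime_iff_gcd P B x h1 h2 hB hx (by omega)
    rw [chk] at h
    have e : x + (k + 1) = x + 1 + k := by ring
    rw [e]
    by_cases hp : x.Prime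
    · have hg : Nat.beq (Nat.gcd x P) 1 = true := by rw [key.mp hp]; rfl
      rw [hg] at h
      by_cases ho : okc x (cntP x) (smP x) = true
      · simp only [ho] at h
        have hc := cntP_succ x
        have hs := smP_succ x
        rw [if_pos hp] at hc hs
        rw [← hc, ← hs] at h
        obtain ⟨a, b, c⟩ := ih (x + 1) n' S' (by omega) (by omega) (by omega) h
        refine ⟨fun y hy1 hy2 hy3 => ?_, b, c⟩
        rcases Nat.eq_or_lt_of_le hy1 with rfl | hlt
        · exact ho
        · exact a y hlt hy2 hy3
      · simp [ho] at h
    · have hg : Nat.beq (Nat.gcd x P) 1 = false := by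
        rw [Bool.eq_false_iff]
        exact fun hh => hp (key.mpr (Nat.eq_of_beq_eq_true hh))
      rw [hg] at h
      have hc := cntP_succ x
      have hs := smP_succ x
      rw [if_neg hp, add_zero] at hc hs
      simp only [] at h
      rw [← hc, ← hs] at h
      obtain ⟨a, b, c⟩ := ih (x + 1) n' S' (by omega) (by omega) (by omega) h
      refine ⟨fun y hy1 hy2 hy3 => ?_, b, c⟩
      rcases Nat.eq_or_lt_of_le hy1 with rfl | hlt
      · exact absurd hy3 hp
      · exact a y hlt hy2 hy3

def PP : ℕ := 261546705642188677527611215060743478325487449257450867559845540208082579687704696223087912212929304531286298200244292923511657074872113330370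

lemma PP_dvd : PP ∣ Nat.factorial 349 := by
  apply Nat.dvd_of_mod_eq_zero
  decide +kernel

lemma dvd_PP : Nat.factorial 349 ∣ PP ^ 350 := by
  apply Nat.dvd_of_mod_eq_zero
  decide +kernel

lemma PP1 : ∀ q, q.Prime → q ≤ 349 → q ∣ PP := fun _ hq h =>
  hq.dvd_of_dvd_pow (((hq.dvd_factorial).mpr h).trans dvd_PP)

lemma PP2 : ∀ q, q.Prime → q ∣ PP → q ≤ 349 := fun _ hq h =>
  (hq.dvd_factorial).mp (h.trans PP_dvd)

lemma chunk (x k n S n' S' : ℕ) (hx : 349 < x) (hk : x + k ≤ 122500)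
    (hs : (∀ y, 7 ≤ y → y < x → y.Prime → okc y (cntP y) (smP y) = true) ∧ cntP x = n ∧ smP x = S)
    (h : chk PP k x n S n' S' = true) :
    (∀ y, 7 ≤ y → y < x + k → y.Prime → okc y (cntP y) (smP y) = true) ∧
      cntP (x + k) = n' ∧ smP (x + k) = S' := by
  obtain ⟨h1, h2, h3⟩ := hs
  subst h2 h3
  obtain ⟨a, b, c⟩ := chk_sound PP 349 PP1 PP2 k x n' S' hx (by omega) (by omega) h
  refine ⟨fun y hy1 hy2 hy3 => ?_, b, c⟩
  rcases lt_or_ge y x with hlt | hge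
  · exact h1 y hy1 hlt hy3
  · exact a y hge hy2 hy3

lemma st7 : cntP 7 = 3 ∧ smP 7 = 10 := by
  unfold cntP smP
  have : (Finset.range 7).filter Nat.Prime = {2, 3, 5} := by decide
  rw [this]; decide

lemma st20 : (∀ y, 7 ≤ y → y < 20 → y.Prime → okc y (cntP y) (smP y) = true) ∧
    cntP 20 = 8 ∧ smP 20 = 77 := by
  refine chk_sound (Nat.factorial 5) 5 (fun q hq h => (hq.dvd_factorial).mpr h)
    (fun q hq h => (hq.dvd_factorial).mp h) 13 7 8 77 (by norm_num)
    (by norm_num) (by norm_num) ?_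
  rw [st7.1, st7.2]; decide +kernel

lemma st350 : (∀ y, 7 ≤ y → y < 350 → y.Prime → okc y (cntP y) (smP y) = true) ∧
    cntP 350 = 70 ∧ smP 350 = 10887 := by
  obtain ⟨a, b, c⟩ := st20
  have := chk_sound (Nat.factorial 18) 18 (fun q hq h => (hq.dvd_factorial).mpr h)
    (fun q hq h => (hq.dvd_factorial).mp h) 330 20 70 10887 (by norm_num)
    (by norm_num) (by norm_num) (by rw [b, c]; decide +kernel)
  refine ⟨fun y hy1 hy2 hy3 => ?_, this.2⟩
  rcases lt_or_ge y 20 with hlt | hge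
  · exact a y hy1 hlt hy3
  · exact this.1 y hge hy2 hy3

lemma fin_all : (∀ y, 7 ≤ y → y < 121500 → y.Prime → okc y (cntP y) (smP y) = true) ∧
    cntP 121500 = 11434 ∧ smP 121500 = 658424009 := by
  have h := st350
  replace h := chunk 350 9650 70 10887 1229 5736396 (by norm_num) (by norm_num) h (by decide +kernel)
  replace h := chunk 10000 10000 1229 5736396 2262 21171191 (by norm_num) (by norm_num) h (by decide +kernel)
  replace h := chunk 20000 10000 2262 21171191 3245 45675864 (by norm_num) (by norm_num) h (by decide +kernel)
  replace h := chunk 30000 10000 3245 45675864 4203 79170666 (by norm_num) (by norm_num) h (by decide +kernel)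
  replace h := chunk 40000 10000 4203 79170666 5133 121013308 (by norm_num) (by norm_num) h (by decide +kernel)
  replace h := chunk 50000 10000 5133 121013308 6057 171848738 (by norm_num) (by norm_num) h (by decide +kernel)
  replace h := chunk 60000 10000 6057 171848738 6935 228890418 (by norm_num) (by norm_num) h (by decide +kernel)
  replace h := chunk 70000 10000 6935 228890418 7837 296488208 (by norm_num) (by norm_num) h (by decide +kernel)
  replace h := chunk 80000 10000 7837 296488208 8713 370927314 (by norm_num) (by norm_num) h (by decide +kernel)
  replace h := chunk 90000 10000 8713 370927314 9592 454396537 (by norm_num) (by norm_num) h (by decide +kernel)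
  replace h := chunk 100000 10000 9592 454396537 10453 544815056 (by norm_num) (by norm_num) h (by decide +kernel)
  replace h := chunk 110000 10000 10453 544815056 11301 642361192 (by norm_num) (by norm_num) h (by decide +kernel)
  replace h := chunk 120000 1500 11301 642361192 11434 658424009 (by norm_num) (by norm_num) h (by decide +kernel)
  exact h
def lc : ℕ → ℕ → ℕ → Bool
  | 0, _, _ => true
  | k + 1, m, L =>
    match Nat.ble L (2 ^ (1558 * m / 1000)) with
    | true => lc k (m + 1) (L / Nat.gcd L (m + 1) * (m + 1))
    | false => false

lemma lcmUpto_succ' (m : ℕ) :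
    Nat.lcmUpto (m + 1) = Nat.lcmUpto m / Nat.gcd (Nat.lcmUpto m) (m + 1) * (m + 1) := by
  have : Nat.lcmUpto (m + 1) = Nat.lcm (Nat.lcmUpto m) (m + 1) := by
    unfold Nat.lcmUpto
    rw [← Finset.insert_Icc_right_eq_Icc_add_one (by omega), Finset.lcm_insert, lcm_comm]
    rfl
  rw [this, Nat.lcm, Nat.div_mul_right_comm (Nat.gcd_dvd_left _ _)]

lemma lc_sound (k : ℕ) : ∀ m, lc k m (Nat.lcmUpto m) = true →
    ∀ y, m ≤ y → y < m + k → Nat.lcmUpto y ≤ 2 ^ (1558 * y / 1000) := by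
  induction k with
  | zero => intro m _ y h1 h2; omega
  | succ k ih =>
    intro m h y h1 h2
    rw [lc] at h
    by_cases ho : Nat.ble (Nat.lcmUpto m) (2 ^ (1558 * m / 1000)) = true
    · simp only [ho] at h
      rw [← lcmUpto_succ'] at h
      rcases Nat.eq_or_lt_of_le h1 with rfl | hlt
      · exact Nat.le_of_ble_eq_true ho
      · exact ih (m + 1) h y hlt (by omega)
    · simp [ho] at h

lemma lc_run : lc 25000 0 1 = true := by decide +kernel

lemma psi_base (m : ℕ) (hm : m < 25000) : Chebyshev.psi m ≤ 1.08 * m := by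
  have h0 : Nat.lcmUpto 0 = 1 := by simp [Nat.lcmUpto]
  have h := lc_sound 25000 0 (by rw [h0]; exact lc_run) m (by omega) (by omega)
  rw [Chebyshev.psi_eq_log_lcmUpto]
  have hp := Nat.lcmUpto_pos m
  have h1 : Real.log (Nat.lcmUpto m) ≤ Real.log ((2 : ℝ) ^ (1558 * m / 1000)) := by
    apply Real.log_le_log (by exact_mod_cast hp)
    exact_mod_cast h
  rw [Real.log_pow] at h1
  have h2 : ((1558 * m / 1000 : ℕ) : ℝ) ≤ 1.558 * m := by
    refine Nat.cast_div_le.trans ?_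
    push_cast
    linarith
  have h3 := Real.log_two_lt_d9
  have h4 := Real.log_two_gt_d9
  have h5 : (0 : ℝ) ≤ m := by positivity
  nlinarith
open ArithmeticFunction in
lemma log_fact (M m : ℕ) (h : m ≤ M) :
    Real.log (m.factorial : ℝ) = ∑ d ∈ Finset.Ioc 0 M, vonMangoldt d * ((m / d : ℕ) : ℝ) := by
  induction m with
  | zero => simp
  | succ m ih =>
    rw [Nat.factorial_succ, Nat.cast_mul, Real.log_mul (by positivity) (by positivity),
      ih (by omega), ← vonMangoldt_sum]
    have : ∑ i ∈ (m + 1).divisors, vonMangoldt i =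
        ∑ d ∈ Finset.Ioc 0 M, if d ∣ m + 1 then vonMangoldt d else 0 := by
      rw [← Finset.sum_filter]
      apply Finset.sum_congr _ (fun _ _ => rfl)
      ext d
      simp only [Nat.mem_divisors, Finset.mem_filter, Finset.mem_Ioc]
      constructor
      · rintro ⟨h1, _⟩
        exact ⟨⟨Nat.pos_of_dvd_of_pos h1 (by omega), (Nat.le_of_dvd (by omega) h1).trans h⟩, h1⟩
      · rintro ⟨_, h1⟩
        exact ⟨h1, by omega⟩
    rw [this, ← Finset.sum_add_distrib]
    apply Finset.sum_congr rfl
    intro d _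
    rw [Nat.succ_div]
    split_ifs with hd
    · push_cast; ring
    · simp

open ArithmeticFunction in
lemma psi_div (m k : ℕ) (hk : 0 < k) :
    Chebyshev.psi ((m / k : ℕ) : ℝ) =
      ∑ d ∈ Finset.Ioc 0 m, vonMangoldt d * (if k ≤ m / d then 1 else 0) := by
  rw [Chebyshev.psi, Nat.floor_natCast]
  simp only [mul_ite, mul_one, mul_zero]
  rw [← Finset.sum_filter]
  apply Finset.sum_congr _ (fun _ _ => rfl)
  ext d
  simp only [Finset.mem_filter, Finset.mem_Ioc]
  constructor
  · rintro ⟨h1, h2⟩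
    rw [Nat.le_div_iff_mul_le hk] at h2
    refine ⟨⟨h1, ?_⟩, ?_⟩
    · nlinarith
    · rw [Nat.le_div_iff_mul_le h1]; linarith
  · rintro ⟨⟨h1, h2⟩, h3⟩
    rw [Nat.le_div_iff_mul_le h1] at h3
    refine ⟨h1, ?_⟩
    rw [Nat.le_div_iff_mul_le hk]; linarith

noncomputable def LF (m : ℕ) : ℝ := Real.log (m.factorial : ℝ)
noncomputable def EE (m : ℕ) : ℝ := LF m - LF (m / 2) - LF (m / 3) - LF (m / 5) + LF (m / 30)

open ArithmeticFunction in
lemma EE_eq (m : ℕ) : EE m = ∑ d ∈ Finset.Ioc 0 m, vonMangoldt d *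
    (((m / d : ℕ) : ℝ) - ((m / d / 2 : ℕ) : ℝ) - ((m / d / 3 : ℕ) : ℝ) - ((m / d / 5 : ℕ) : ℝ)
      + ((m / d / 30 : ℕ) : ℝ)) := by
  unfold EE LF
  rw [log_fact m m le_rfl, log_fact m (m / 2) (Nat.div_le_self _ _),
    log_fact m (m / 3) (Nat.div_le_self _ _), log_fact m (m / 5) (Nat.div_le_self _ _),
    log_fact m (m / 30) (Nat.div_le_self _ _), ← Finset.sum_sub_distrib, ← Finset.sum_sub_distrib,
    ← Finset.sum_sub_distrib, ← Finset.sum_add_distrib]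
  apply Finset.sum_congr rfl
  intro d _
  rw [Nat.div_right_comm m 2, Nat.div_right_comm m 3, Nat.div_right_comm m 5,
    Nat.div_right_comm m 30]
  ring

lemma EE_le_psi (m : ℕ) : EE m ≤ Chebyshev.psi m := by
  have := psi_div m 1 one_pos
  rw [Nat.div_one] at this
  rw [this, EE_eq]
  apply Finset.sum_le_sum
  intro d _
  apply mul_le_mul_of_nonneg_left _ ArithmeticFunction.vonMangoldt_nonneg
  generalize m / d = q
  split_ifs with h
  · have : q + q / 30 ≤ 1 + q / 2 + q / 3 + q / 5 := by omega
    have : (q : ℝ) + (q / 30 : ℕ) ≤ 1 + (q / 2 : ℕ) + (q / 3 : ℕ) + (q / 5 : ℕ) := by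
      exact_mod_cast this
    linarith
  · have : q = 0 := by omega
    subst this; simp

lemma psi_le_EE (m : ℕ) : Chebyshev.psi m ≤ EE m + Chebyshev.psi ((m / 6 : ℕ) : ℝ) -
    Chebyshev.psi ((m / 7 : ℕ) : ℝ) + Chebyshev.psi ((m / 10 : ℕ) : ℝ) := by
  have := psi_div m 1 one_pos
  rw [Nat.div_one] at this
  rw [this, EE_eq, psi_div m 6 (by norm_num), psi_div m 7 (by norm_num),
    psi_div m 10 (by norm_num), ← Finset.sum_add_distrib, ← Finset.sum_sub_distrib,
    ← Finset.sum_add_distrib]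
  apply Finset.sum_le_sum
  intro d _
  rw [← mul_add, ← mul_sub, ← mul_add]
  apply mul_le_mul_of_nonneg_left _ ArithmeticFunction.vonMangoldt_nonneg
  generalize m / d = q
  have : (if 1 ≤ q then 1 else 0) + (if 7 ≤ q then 1 else 0) + q / 2 + q / 3 + q / 5 ≤
    q + q / 30 + (if 6 ≤ q then 1 else 0) + (if 10 ≤ q then 1 else 0) := by
    split_ifs <;> omega
  have : ((if 1 ≤ q then 1 else 0) + (if 7 ≤ q then 1 else 0) + (q / 2 : ℕ) + (q / 3 : ℕ) + (q / 5 : ℕ) : ℝ) ≤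
    q + (q / 30 : ℕ) + (if 6 ≤ q then 1 else 0) + (if 10 ≤ q then 1 else 0) := by
    exact_mod_cast this
  linarith

lemma LF_up (y : ℝ) (hy : 1 ≤ y) : LF ⌊y⌋₊ ≤ y * Real.log y - y + Real.log y / 2 + 1 := by
  set n := ⌊y⌋₊ with hn
  have hn1 : 1 ≤ n := by rw [hn]; exact Nat.le_floor (by simpa using hy)
  have hny : (n : ℝ) ≤ y := Nat.floor_le (by linarith)
  have h1 : Real.log (Stirling.stirlingSeq n) ≤ Real.log (Stirling.stirlingSeq 1) := by
    have := Stirling.log_stirlingSeq'_antitone (Nat.zero_le (n - 1))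
    simp only [Function.comp] at this
    rwa [Nat.succ_eq_add_one, Nat.sub_add_cancel hn1] at this
  have hnr : (1 : ℝ) ≤ n := by exact_mod_cast hn1
  have h1e : Real.log (Real.exp 1 / √2) = 1 - Real.log 2 / 2 := by
    rw [Real.log_div (by positivity) (by positivity), Real.log_exp, Real.log_sqrt (by norm_num)]
  rw [Stirling.log_stirlingSeq_formula, Stirling.stirlingSeq_one, h1e,
    Real.log_mul (by norm_num) (by positivity),
    Real.log_div (by positivity) (by positivity), Real.log_exp] at h1
  have h2 : LF n ≤ n * Real.log n - n + Real.log n / 2 + 1 := by unfold LF; linarith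
  have h3 : Real.log n ≤ Real.log y := Real.log_le_log (by linarith) hny
  have h4 : 1 - n / y ≤ Real.log y - Real.log n := by
    have := Real.one_sub_inv_le_log_of_pos (x := y / n) (by positivity)
    rwa [Real.log_div (by positivity) (by positivity), inv_div] at this
  have h5 : 0 ≤ Real.log n := Real.log_nonneg hnr
  have h6 : (n : ℝ) * (1 - n / y) ≤ n * (Real.log y - Real.log n) := by gcongr
  have h7 : (y - n) * (1 - n / y) ≤ (y - n) * (Real.log y) := by
    apply mul_le_mul_of_nonneg_left _ (by linarith); linarith
  have h8 : y * (1 - n / y) = y - n := by field_simp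
  nlinarith

lemma LF_lo (y : ℝ) (hy : 2 ≤ y) : y * Real.log y - y - Real.log y / 2 + 0.9 ≤ LF ⌊y⌋₊ := by
  set n := ⌊y⌋₊ with hn
  have hny : y < (n : ℝ) + 1 := Nat.lt_floor_add_one y
  have h1 := Stirling.le_log_factorial_stirling (n := n + 1) (by omega)
  rw [Nat.factorial_succ, Nat.cast_mul,
    Real.log_mul (x := ((n + 1 : ℕ) : ℝ)) (by positivity) (by positivity)] at h1
  push_cast at h1
  set z : ℝ := (n : ℝ) + 1 with hz
  have h2 : (0.9 : ℝ) ≤ Real.log (2 * Real.pi) / 2 := by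
    have : (1.8 : ℝ) ≤ Real.log (2 * Real.pi) := by
      rw [Real.le_log_iff_exp_le (by positivity)]
      have e1 : Real.exp 1.8 = Real.exp 1 ^ (2 : ℕ) * Real.exp (-0.2) := by
        rw [← Real.exp_nat_mul, ← Real.exp_add]; norm_num
      have e2 : Real.exp (-0.2) ≤ 1 / 1.2 := by
        rw [Real.exp_neg, inv_eq_one_div]
        apply one_div_le_one_div_of_le (by norm_num)
        have := Real.add_one_le_exp (0.2 : ℝ); linarith
      have e3 := Real.exp_one_lt_d9
      have e4 : Real.exp 1 ^ 2 ≤ 2.7182818286 ^ 2 := by gcongr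
      have e5 := Real.pi_gt_d2
      rw [e1]
      calc _ ≤ (2.7182818286 : ℝ) ^ 2 * (1 / 1.2) := by gcongr
        _ ≤ _ := by norm_num; linarith
    linarith
  have h3 : Real.log z - Real.log y ≤ z / y - 1 := by
    have := Real.log_le_sub_one_of_pos (x := z / y) (by positivity)
    rwa [Real.log_div (by positivity) (by positivity)] at this
  have h4 : 1 - y / z ≤ Real.log z - Real.log y := by
    have := Real.one_sub_inv_le_log_of_pos (x := z / y) (by positivity)
    rwa [Real.log_div (by positivity) (by positivity), inv_div] at this
  have h5 : (0.69 : ℝ) ≤ Real.log y := by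
    have := Real.log_le_log (by norm_num) hy
    have := Real.log_two_gt_d9
    linarith
  -- z log z - z - (y log y - y) ≥ (z - y) log y
  have h6 : z * (1 - y / z) ≤ z * (Real.log z - Real.log y) := by
    apply mul_le_mul_of_nonneg_left h4; positivity
  have hz0 : z ≠ 0 := by positivity
  have h7 : z * (1 - y / z) = z - y := by rw [mul_sub, mul_div_cancel₀ _ hz0, mul_one]
  have h8 : z / y - 1 = (z - y) / y := by field_simp
  have h9 : (z - y) / y ≤ (z - y) * 0.5 := by
    rw [div_le_iff₀ (by linarith)]; nlinarith
  have h10 : (z - y) * 0.69 ≤ (z - y) * Real.log y := by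
    apply mul_le_mul_of_nonneg_left h5; linarith
  unfold LF
  nlinarith

noncomputable def AA : ℝ := (14 * Real.log 2 + 9 * Real.log 3 + 5 * Real.log 5) / 30

lemma AA_lo : 0.92129 ≤ AA := by
  unfold AA
  have := Real.log_two_gt_d9
  have := Real.log_three_gt_d9
  have := Real.log_five_gt_d9
  linarith

lemma AA_hi : AA ≤ 0.921293 := by
  unfold AA
  have := Real.log_two_lt_d9
  have := Real.log_three_lt_d9
  have := Real.log_five_lt_d9
  linarith

lemma fl (y : ℝ) (k : ℕ) : ⌊y⌋₊ / k = ⌊y / k⌋₊ := (Nat.floor_div_natCast y k).symm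

lemma log30 : Real.log 30 = Real.log 2 + Real.log 3 + Real.log 5 := by
  rw [← Real.log_mul (by norm_num) (by norm_num), ← Real.log_mul (by norm_num) (by norm_num)]
  norm_num

lemma EE_bounds (y : ℝ) (hy : 60 ≤ y) :
    EE ⌊y⌋₊ ≤ AA * y + 5 / 2 * Real.log y - 4 ∧ AA * y - 5 / 2 * Real.log y + 2 ≤ EE ⌊y⌋₊ := by
  have a1 := LF_up y (by linarith)
  have a2 := LF_up (y / 2) (by linarith)
  have a3 := LF_up (y / 3) (by linarith)
  have a5 := LF_up (y / 5) (by linarith)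
  have a30 := LF_up (y / 30) (by linarith)
  have b1 := LF_lo y (by linarith)
  have b2 := LF_lo (y / 2) (by linarith)
  have b3 := LF_lo (y / 3) (by linarith)
  have b5 := LF_lo (y / 5) (by linarith)
  have b30 := LF_lo (y / 30) (by linarith)
  have f2 := fl y 2
  have f3 := fl y 3
  have f5 := fl y 5
  have f30 := fl y 30
  push_cast at f2 f3 f5 f30
  have hy0 : y ≠ 0 := by linarith
  rw [Real.log_div hy0 (by norm_num)] at a2 a3 a5 a30 b2 b3 b5 b30
  rw [log30] at a30 b30
  unfold EE AA
  rw [f2, f3, f5, f30]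
  have := Real.log_two_gt_d9
  have := Real.log_three_gt_d9
  have := Real.log_five_gt_d9
  constructor <;> nlinarith
lemma psi_up_nat (m : ℕ) : Chebyshev.psi m ≤ 1.08 * m := by
  induction m using Nat.strong_induction_on with
  | _ m ih =>
    rcases lt_or_ge m 25000 with h | h
    · exact psi_base m h
    have hy : (25000 : ℝ) ≤ m := by exact_mod_cast h
    have h1 := psi_le_EE m
    have h2 := (EE_bounds m (by linarith)).1
    rw [Nat.floor_natCast] at h2
    have h3 := (EE_bounds ((m : ℝ) / 7) (by linarith)).2
    have f7 := fl m 7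
    push_cast at f7
    rw [← f7, Nat.floor_natCast] at h3
    have h4 := EE_le_psi (m / 7)
    have h6 := ih (m / 6) (by omega)
    have h10 := ih (m / 10) (by omega)
    have d6 : ((m / 6 : ℕ) : ℝ) ≤ m / 6 := by simpa using Nat.cast_div_le (α := ℝ) (m := m) (n := 6)
    have d10 : ((m / 10 : ℕ) : ℝ) ≤ m / 10 := by
      simpa using Nat.cast_div_le (α := ℝ) (m := m) (n := 10)
    have l7 : Real.log ((m : ℝ) / 7) ≤ Real.log m :=
      Real.log_le_log (by linarith) (by linarith)
    have hl : Real.log m ≤ m / 25000 + 9.2 := by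
      have e1 := Real.log_le_sub_one_of_pos (x := (m : ℝ) / 25000) (by linarith)
      rw [Real.log_div (by linarith) (by norm_num)] at e1
      have e2 : Real.log 25000 = 3 * Real.log 2 + 5 * Real.log 5 := by
        rw [show (25000 : ℝ) = 2 ^ 3 * 5 ^ 5 by norm_num, Real.log_mul (by norm_num) (by norm_num),
          Real.log_pow, Real.log_pow]
        norm_num
      have := Real.log_two_lt_d9
      have := Real.log_five_lt_d9
      linarith
    have hA := AA_hi
    have hA2 : AA * m ≤ 0.921293 * m := by gcongr
    linarith

lemma psi_up (x : ℝ) (hx : 0 ≤ x) : Chebyshev.psi x ≤ 1.08 * x := by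
  rw [Chebyshev.psi_eq_psi_coe_floor]
  refine (psi_up_nat _).trans ?_
  have := Nat.floor_le hx
  linarith

lemma theta_lo (x : ℝ) (hx : 121500 ≤ x) (m : ℕ) (hm : (m : ℝ) ≤ x) :
    AA * m - 0.00391 * x ≤ Chebyshev.theta m := by
  have hx0 : 0 ≤ x := by linarith
  rcases lt_or_ge m 60 with h | h
  · have : (m : ℝ) < 60 := by exact_mod_cast h
    have h1 := Chebyshev.theta_nonneg m
    have := AA_hi
    have := AA_lo
    nlinarith
  have hm60 : (60 : ℝ) ≤ m := by exact_mod_cast h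
  have h1 := Chebyshev.psi_sub_theta_le_psi_add_psi_add_psi m
  have root : ∀ k : ℕ, k ≠ 0 → ∀ t0 : ℝ, 0 ≤ t0 → t0 ^ k ≤ 121500 →
      t0 ^ (k - 1) * Chebyshev.psi ((m : ℝ) ^ ((k : ℝ)⁻¹)) ≤ 1.08 * x := by
    intro k hk t0 ht0 htk
    have hp : 0 ≤ x ^ ((k : ℝ)⁻¹) := by positivity
    have e1 : Chebyshev.psi ((m : ℝ) ^ ((k : ℝ)⁻¹)) ≤ 1.08 * x ^ ((k : ℝ)⁻¹) := by
      refine (psi_up _ (by positivity)).trans ?_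
      gcongr
    have e2 : (x ^ ((k : ℝ)⁻¹)) ^ k = x := Real.rpow_inv_natCast_pow hx0 hk
    have e3 : t0 ≤ x ^ ((k : ℝ)⁻¹) := by
      apply le_of_pow_le_pow_left₀ hk hp
      rw [e2]; linarith
    obtain ⟨j, rfl⟩ := Nat.exists_eq_succ_of_ne_zero hk
    simp only [Nat.succ_eq_add_one, Nat.add_sub_cancel] at *
    set t := x ^ (((j + 1 : ℕ) : ℝ)⁻¹)
    calc _ ≤ t0 ^ j * (1.08 * t) := by gcongr
      _ ≤ t ^ j * (1.08 * t) := by gcongr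
      _ = 1.08 * t ^ (j + 1) := by ring
      _ = _ := by rw [e2]
  have r2 := root 2 (by norm_num) 348 (by norm_num) (by norm_num)
  have r3 := root 3 (by norm_num) 49 (by norm_num) (by norm_num)
  have r5 := root 5 (by norm_num) 10 (by norm_num) (by norm_num)
  norm_num at r2 r3 r5 h1
  have h2 := (EE_bounds m hm60).2
  rw [Nat.floor_natCast] at h2
  have h3 := EE_le_psi m
  have hl : Real.log m ≤ x / 121500 + 10.71 := by
    have e0 : Real.log m ≤ Real.log x := Real.log_le_log (by linarith) hm
    have e1 := Real.log_le_sub_one_of_pos (x := x / 121500) (by linarith)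
    rw [Real.log_div (by linarith) (by norm_num)] at e1
    have e2 : Real.log 121500 = 2 * Real.log 2 + 5 * Real.log 3 + 3 * Real.log 5 := by
      rw [show (121500 : ℝ) = 2 ^ 2 * 3 ^ 5 * 5 ^ 3 by norm_num,
        Real.log_mul (by norm_num) (by norm_num), Real.log_mul (by norm_num) (by norm_num),
        Real.log_pow, Real.log_pow, Real.log_pow]
      norm_num
    have := Real.log_two_lt_d9
    have := Real.log_three_lt_d9
    have := Real.log_five_lt_d9
    linarith
  linarith

lemma theta_range (x : ℕ) :
    Chebyshev.theta x = ∑ p ∈ (Finset.range (x + 1)).filter Nat.Prime, Real.log p := by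
  rw [Chebyshev.theta_eq_sum_Icc, Nat.floor_natCast, Nat.range_succ_eq_Icc_zero]

lemma sum_theta (x : ℕ) : ∑ m ∈ Finset.range x, Chebyshev.theta m =
    ∑ p ∈ (Finset.range x).filter Nat.Prime, ((x : ℝ) - p) * Real.log p := by
  induction x with
  | zero => simp
  | succ x ih =>
    rw [Finset.sum_range_succ, ih, theta_range]
    rw [Finset.sum_filter, Finset.sum_filter, Finset.sum_filter, Finset.sum_range_succ,
      Finset.sum_range_succ, ← add_assoc, ← Finset.sum_add_distrib]
    congr 1
    · apply Finset.sum_congr rfl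
      intro p _
      split_ifs
      · push_cast; ring
      · simp
    · push_cast
      simp

lemma big (x : ℕ) (hx : 121500 ≤ x) (hn : 11434 ≤ cntP x) :
    (cntP x : ℝ) * (cntP x + 1) * x * 10000 <
      (cntP x * x - smP x) * (23678 * cntP x + 10000) := by
  have hxr : (121500 : ℝ) ≤ x := by exact_mod_cast hx
  set s := (Finset.range x).filter Nat.Prime with hs
  have anti : AntivaryOn (fun p : ℕ => (x : ℝ) - p) (fun p : ℕ => Real.log p) (s : Set ℕ) := by
    intro p hp q hq h
    simp only [hs, Finset.coe_filter, Set.mem_ofPred_eq] at hp hq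
    have hp0 : (0 : ℝ) < p := by exact_mod_cast hp.2.pos
    have hq0 : (0 : ℝ) < q := by exact_mod_cast hq.2.pos
    have := (Real.log_lt_log_iff hp0 hq0).mp h
    simp only
    linarith
  have h1 := anti.card_mul_sum_le_sum_mul_sum
  have h2 : ∑ p ∈ s, ((x : ℝ) - p) = cntP x * x - smP x := by
    rw [Finset.sum_sub_distrib, Finset.sum_const, nsmul_eq_mul]
    unfold cntP smP
    push_cast
    rfl
  have h3 : ∑ p ∈ s, Real.log (p : ℝ) ≤ 1.08 * x := by
    refine le_trans ?_ ((Chebyshev.theta_le_psi x).trans (psi_up_nat x))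
    rw [theta_range]
    apply Finset.sum_le_sum_of_subset_of_nonneg
    · apply Finset.filter_subset_filter
      intro a; simp; omega
    · intro p _ _
      exact Real.log_natCast_nonneg p
  have h4 : (0.4226 * 1.08) * (x : ℝ) ^ 2 ≤ ∑ p ∈ s, ((x : ℝ) - p) * Real.log p := by
    rw [← sum_theta]
    have e1 : ∑ m ∈ Finset.range x, (AA * m - 0.00391 * x) ≤
        ∑ m ∈ Finset.range x, Chebyshev.theta m := by
      apply Finset.sum_le_sum
      intro m hm
      apply theta_lo x hxr
      have := Finset.mem_range.mp hm
      exact_mod_cast this.le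
    refine le_trans ?_ e1
    have e2 : ∑ m ∈ Finset.range x, (m : ℝ) = x * (x - 1) / 2 := by
      have h := Finset.sum_range_id_mul_two x
      have h' : (∑ m ∈ Finset.range x, (m : ℝ)) * 2 = x * (x - 1) := by
        have := congrArg (Nat.cast (R := ℝ)) h
        push_cast [Nat.cast_sub (show 1 ≤ x by omega)] at this
        exact this
      linarith
    rw [Finset.sum_sub_distrib, ← Finset.mul_sum, e2, Finset.sum_const, Finset.card_range,
      nsmul_eq_mul]
    have hA := AA_lo
    have : 0.92129 * ((x : ℝ) * (x - 1) / 2) ≤ AA * ((x : ℝ) * (x - 1) / 2) := by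
      apply mul_le_mul_of_nonneg_right hA
      have : (0 : ℝ) ≤ x * (x - 1) := mul_nonneg (by linarith) (by linarith)
      linarith
    nlinarith
  set D : ℝ := cntP x * x - smP x with hD
  rw [h2] at h1
  have hD0 : 0 ≤ D := by
    rw [← h2]
    apply Finset.sum_nonneg
    intro p hp
    simp only [hs, Finset.mem_filter, Finset.mem_range] at hp
    have : (p : ℝ) < x := by exact_mod_cast hp.1
    linarith
  have hc : (s.card : ℝ) = cntP x := rfl
  rw [hc] at h1
  have hnr : (11434 : ℝ) ≤ cntP x := by exact_mod_cast hn
  set n : ℝ := (cntP x : ℝ)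
  have h5 : n * ((0.4226 * 1.08) * (x : ℝ) ^ 2) ≤ D * (1.08 * x) :=
    (mul_le_mul_of_nonneg_left h4 (by linarith)).trans
      (h1.trans (mul_le_mul_of_nonneg_left h3 hD0))
  have h6 : n * 0.4226 * x ≤ D := by
    have hpos : (0 : ℝ) < 1.08 * x := by linarith
    refine le_of_mul_le_mul_right ?_ hpos
    nlinarith
  have h7 : (n * 0.4226 * x) * (23678 * n + 10000) ≤ D * (23678 * n + 10000) := by
    apply mul_le_mul_of_nonneg_right h6; linarith
  refine lt_of_lt_of_le ?_ h7
  have h8 : (n + 1) * 10000 < 0.4226 * (23678 * n + 10000) := by linarith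
  have h9 : 0 < n * x := mul_pos (by linarith) (by linarith)
  nlinarith [mul_lt_mul_of_pos_left h8 h9]
lemma cnt_nth (n : ℕ) : cntP (Nat.nth Nat.Prime n) = n := by
  unfold cntP
  rw [← Nat.count_eq_card_filter_range]
  exact Nat.count_nth_of_infinite Nat.infinite_setOfPred_prime n

lemma sm_nth (n : ℕ) : smP (Nat.nth Nat.Prime n) = ∑ i ∈ Finset.Icc 1 n, nthPrime i := by
  induction n with
  | zero =>
    rw [Nat.nth_prime_zero_eq_two]
    have : (Finset.range 2).filter Nat.Prime = ∅ := by decide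
    unfold smP
    rw [this]; simp
  | succ n ih =>
    rw [Finset.sum_Icc_succ_top (by omega), ← ih]
    unfold smP
    rw [Nat.filter_range_nth_eq_insert_of_infinite Nat.infinite_setOfPred_prime,
      Finset.sum_insert (by simp), add_comm]
    rfl

lemma main_ineq (n : ℕ) (hn : 3 ≤ n) :
    (n : ℝ) * (n + 1) * (Nat.nth Nat.Prime n : ℕ) * 10000 <
      (n * (Nat.nth Nat.Prime n : ℕ) - (∑ i ∈ Finset.Icc 1 n, (nthPrime i : ℝ))) * (23678 * n + 10000) := by
  have hp : (Nat.nth Nat.Prime n).Prime := Nat.prime_nth_prime n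
  have hc := cnt_nth n
  have hs := sm_nth n
  set x := Nat.nth Nat.Prime n
  have hs' : (∑ i ∈ Finset.Icc 1 n, (nthPrime i : ℝ)) = (smP x : ℝ) := by rw [hs]; push_cast; rfl
  rw [hs']
  have mono : ∀ a b : ℕ, a ≤ b → cntP a ≤ cntP b := fun a b hab =>
    Finset.card_le_card (Finset.filter_subset_filter _ (Finset.range_mono hab))
  rcases lt_or_ge x 121500 with h | h
  · have h7 : 7 ≤ x := by
      by_contra hlt
      have h5 : x ≤ 5 := by
        by_contra h6
        have : x = 6 := by omega
        rw [this] at hp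
        revert hp; norm_num
      have h1 := mono x 5 h5
      have h2 : cntP 5 = 2 := by
        unfold cntP
        have : (Finset.range 5).filter Nat.Prime = {2, 3} := by decide
        rw [this]; rfl
      omega
    have ho := fin_all.1 x h7 h hp
    rw [hc] at ho
    have ho := Nat.le_of_ble_eq_true ho
    have hle : smP x ≤ n * x := by
      by_contra hgt
      rw [Nat.sub_eq_zero_of_le (by omega)] at ho
      omega
    have ho' : ((n * (n + 1) * x * 10000 + 1 : ℕ) : ℝ) ≤ (((n * x - smP x) * (23678 * n + 10000) : ℕ) : ℝ) := by
      exact_mod_cast ho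
    push_cast [Nat.cast_sub hle] at ho'
    linarith
  · have h1 := mono _ _ h
    rw [fin_all.2.1] at h1
    have := big x h h1
    rwa [hc] at this

theorem stmt8 (n : ℕ) (hn : 3 ≤ n) :
    avgGap n / avgPrime n > 1 / ((n : ℝ) * (1 + Real.exp (-1))) := by
  have key := main_ineq n hn
  have hx : ((nthPrime (n + 1) : ℕ) : ℝ) = (Nat.nth Nat.Prime n : ℕ) := by
    unfold nthPrime; simp
  have hS : 0 < ∑ i ∈ Finset.Icc 1 n, (nthPrime i : ℝ) := by
    apply Finset.sum_pos
    · intro i _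
      exact_mod_cast (Nat.prime_nth_prime (i - 1)).pos
    · exact ⟨1, by simp; omega⟩
  unfold avgGap avgPrime
  rw [Finset.sum_Icc_succ_top (by omega), hx]
  set S := ∑ i ∈ Finset.Icc 1 n, (nthPrime i : ℝ)
  set x : ℝ := ((Nat.nth Nat.Prime n : ℕ) : ℝ)
  have hn3 : (3 : ℝ) ≤ n := by exact_mod_cast hn
  set N : ℝ := (n : ℝ)
  push_cast
  have he : (0.3678 : ℝ) ≤ Real.exp (-1) := by
    rw [Real.exp_neg]
    have h1 := Real.exp_one_lt_d9
    rw [← one_div, le_div_iff₀ (Real.exp_pos 1)]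
    nlinarith
  set c := Real.exp (-1)
  have hNpos : 0 < N := by linarith
  have hD : 0 < N * x - S := by
    have hx0 : 0 ≤ x := Nat.cast_nonneg _
    have h0 : 0 ≤ N * (N + 1) * x * 10000 := by positivity
    by_contra hneg
    have : (N * x - S) * (23678 * N + 10000) ≤ 0 :=
      mul_nonpos_of_nonpos_of_nonneg (by linarith) (by linarith)
    linarith
  have e : (1 / (N + 1) * (S + x) - 1 / N * S) / (1 / N * S) = (N * x - S) / ((N + 1) * S) := by
    field_simp
    ring
  rw [gt_iff_lt, e, div_lt_div_iff₀ (by positivity) (by positivity)]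
  have h2 : (N * x - S) * (N * 0.3678) ≤ (N * x - S) * (N * c) := by gcongr
  nlinarith
end

section
/- For every real m ≥ 1, the averaged-prime analogue of the Legendre conjecture holds: π̄((m+1)²) > π̄(m²), i.e. there is at least one averaged prime strictly between m² and (m+1)² (more precisely, some index i with m² < p̄_i ≤ (m+1)²). -/
open Finset Real

theorem aux_nth_lb (j : ℕ) : 2 * j + 1 ≤ Nat.nth Nat.Prime j ∧ (1 ≤ j → 3 ≤ Nat.nth Nat.Prime j) := by
  induction j with
  | zero => simp [Nat.nth_prime_zero_eq_two]
  | succ j ih =>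
    have hlt : Nat.nth Nat.Prime j < Nat.nth Nat.Prime (j + 1) :=
      Nat.nth_strictMono Nat.infinite_setOf_prime (Nat.lt_succ_self j)
    have hp : (Nat.nth Nat.Prime j).Prime := Nat.prime_nth_prime j
    have hp' : (Nat.nth Nat.Prime (j + 1)).Prime := Nat.prime_nth_prime (j + 1)
    have h2 := hp.two_le
    refine ⟨?_, fun _ => by omega⟩
    rcases Nat.eq_zero_or_pos j with rfl | hj
    · omega
    · have h3 := ih.2 hj
      rcases hp.eq_two_or_odd with h | h <;> rcases hp'.eq_two_or_odd with h' | h' <;> omega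

theorem aux_sum_succ (n : ℕ) : ∑ i ∈ Finset.Icc 1 (n + 1), (nthPrime i : ℝ)
    = ∑ i ∈ Finset.Icc 1 n, (nthPrime i : ℝ) + (Nat.nth Nat.Prime n : ℝ) := by
  rw [Finset.sum_Icc_succ_top (by omega)]
  simp [nthPrime]

theorem aux_sum_lb (n : ℕ) : (n : ℝ) ^ 2 ≤ ∑ i ∈ Finset.Icc 1 n, (nthPrime i : ℝ) := by
  induction n with
  | zero => simp
  | succ n ih =>
    rw [aux_sum_succ]
    have : ((2 * n + 1 : ℕ) : ℝ) ≤ (Nat.nth Nat.Prime n : ℝ) := by exact_mod_cast (aux_nth_lb n).1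
    push_cast at this ⊢
    nlinarith

theorem aux_avg_mul (n : ℕ) (hn : 1 ≤ n) :
    (n : ℝ) * avgPrime n = ∑ i ∈ Finset.Icc 1 n, (nthPrime i : ℝ) := by
  have : (n : ℝ) ≠ 0 := by positivity
  unfold avgPrime
  field_simp

theorem aux_avg_lb (n : ℕ) (hn : 1 ≤ n) : (n : ℝ) ≤ avgPrime n := by
  have h := aux_sum_lb n
  rw [← aux_avg_mul n hn] at h
  have : (0 : ℝ) < n := by positivity
  nlinarith

theorem aux_pi_large (q k : ℕ) (hq : 1000 ≤ q) (hk : Nat.primeCounting q = k) :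
    q ^ 2 ≤ 4 * k ^ 3 := by
  have h := Chebyshev.pi_ge q
  rw [hk] at h
  obtain ⟨t, ht0, ht⟩ : ∃ t : ℝ, 0 ≤ t ∧ t ^ 3 = q :=
    ⟨(q : ℝ) ^ ((1 : ℝ) / 3), by positivity, by
      rw [← Real.rpow_natCast, ← Real.rpow_mul (by positivity)]; norm_num⟩
  have hqR : (1000 : ℝ) ≤ q := by exact_mod_cast hq
  have ht10 : 10 ≤ t := by
    by_contra hc
    push Not at hc
    have : t ^ 3 < 10 ^ 3 := pow_lt_pow_left₀ hc ht0 (by norm_num)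
    linarith
  have hl2 := Real.log_two_lt_d9
  have hl2' := Real.log_two_gt_d9
  have hlogt : Real.log t ≤ 0.2335 * t := by
    have e : Real.log t = Real.log (t / 8) + 3 * Real.log 2 := by
      have : t = (t / 8) * 2 ^ 3 := by ring
      conv_lhs => rw [this]
      rw [Real.log_mul (by positivity) (by positivity), Real.log_pow]
      norm_num
    have := Real.log_le_sub_one_of_pos (show 0 < t / 8 by positivity)
    linarith
  have hlogq : Real.log q = 3 * Real.log t := by
    rw [← ht, Real.log_pow]; norm_num
  have hlogqpos : 0 < Real.log q := Real.log_pos (by linarith)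
  have hlogq1 : Real.log (q + 1) ≤ Real.log q + 1 := by
    have e : (q : ℝ) + 1 = q * (1 + 1 / q) := by field_simp
    rw [e, Real.log_mul (by positivity) (by positivity)]
    have h1 := Real.log_le_sub_one_of_pos (show 0 < 1 + 1 / (q : ℝ) by positivity)
    have h2 : 1 / (q : ℝ) ≤ 1 := by rw [div_le_one (by positivity)]; linarith
    linarith
  rw [div_le_iff₀ hlogqpos] at h
  have hk0 : (0 : ℝ) ≤ k := by positivity
  have h1 : (k : ℝ) * Real.log q ≤ k * (0.7005 * t) :=
    mul_le_mul_of_nonneg_left (by linarith) hk0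
  have h2 : (q : ℝ) * 0.693 ≤ q * Real.log 2 := mul_le_mul_of_nonneg_left (by linarith) (by positivity)
  have h3 : 100 * t ≤ t ^ 3 := by nlinarith [mul_nonneg ht0 (show 0 ≤ t - 10 by linarith)]
  have h4 : t * (0.95 * t ^ 2) ≤ t * k := by nlinarith
  have h5 : 0.95 * t ^ 2 ≤ k := le_of_mul_le_mul_left h4 (by linarith)
  have h6 : (0.95 * t ^ 2) ^ 3 ≤ (k : ℝ) ^ 3 := pow_le_pow_left₀ (by positivity) h5 3
  have h7 : (q : ℝ) ^ 2 ≤ 4 * k ^ 3 := by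
    rw [← ht]
    have : 0 ≤ t ^ 6 := by positivity
    nlinarith
  exact_mod_cast h7

theorem aux_pi (q k : ℕ) (hk2 : 2 ≤ k) (hk : Nat.primeCounting q = k) :
    q ^ 2 ≤ 4 * k ^ 3 := by
  by_contra hc
  push Not at hc
  have key : ∀ a c b : ℕ, Nat.primeCounting a = c → a ≤ q → b ^ 2 ≤ 4 * c ^ 3 → b ≤ q := by
    intro a c b hac haq hb
    have h1 : c ≤ k := by rw [← hac, ← hk]; exact Nat.monotone_primeCounting haq
    have h2 : 4 * c ^ 3 ≤ 4 * k ^ 3 := by gcongr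
    have h3 : b ^ 2 < q ^ 2 := by omega
    exact (lt_of_pow_lt_pow_left₀ 2 (by omega) h3).le
  have h0 : 5 ≤ q := by
    have h2 : 4 * 2 ^ 3 ≤ 4 * k ^ 3 := by gcongr
    nlinarith
  have h1 := key 5 3 10 (by decide +kernel) h0 (by norm_num)
  have h2 := key 10 4 16 (by decide +kernel) h1 (by norm_num)
  have h3 := key 16 6 29 (by decide +kernel) h2 (by norm_num)
  have h4 := key 29 10 63 (by decide +kernel) h3 (by norm_num)
  have h5 := key 63 18 152 (by decide +kernel) h4 (by norm_num)
  have h6 := key 152 36 432 (by decide +kernel) h5 (by norm_num)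
  have h7 := key 432 83 1000 (by decide +kernel) h6 (by norm_num)
  exact absurd (aux_pi_large q k h7 hk) (by omega)

theorem aux_prime_ub (n : ℕ) (hn : 1 ≤ n) :
    (Nat.nth Nat.Prime n) ^ 2 ≤ 4 * (n + 1) ^ 3 := by
  refine aux_pi _ _ (by omega) ?_
  rw [Nat.primeCounting, Nat.primeCounting', Nat.count_succ,
    Nat.count_nth_of_infinite Nat.infinite_setOf_prime]
  simp [Nat.prime_nth_prime]

theorem stmt11 (m : ℝ) (hm : 1 ≤ m) :
    avgPrimeCount ((m + 1) ^ 2) > avgPrimeCount (m ^ 2) := by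
  have hex : ∃ i : ℕ, 1 ≤ i ∧ m ^ 2 < avgPrime i := by
    obtain ⟨N, hN⟩ := exists_nat_gt (m ^ 2)
    refine ⟨N + 1, by omega, ?_⟩
    have := aux_avg_lb (N + 1) (by omega)
    push_cast at this
    linarith
  classical
  have hmain : ∃ i : ℕ, 1 ≤ i ∧ m ^ 2 < avgPrime i ∧ avgPrime i ≤ (m + 1) ^ 2 := by
    refine ⟨Nat.find hex, (Nat.find_spec hex).1, (Nat.find_spec hex).2, ?_⟩
    have hi1 := (Nat.find_spec hex).1
    have hmin : ∀ j, j < Nat.find hex → ¬ (1 ≤ j ∧ m ^ 2 < avgPrime j) := fun j hj => Nat.find_min hex hj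
    generalize Nat.find hex = i at hi1 hmin
    obtain ⟨n, rfl⟩ : ∃ n, i = n + 1 := ⟨i - 1, by omega⟩
    have hS := aux_avg_mul (n + 1) (by omega)
    rw [aux_sum_succ] at hS
    rcases Nat.eq_zero_or_pos n with rfl | hn
    · simp [Nat.nth_prime_zero_eq_two] at hS
      norm_num
      rw [hS]; nlinarith
    · have hA : avgPrime n ≤ m ^ 2 := by
        have := hmin n (by omega)
        push Not at this
        exact this hn
      have hnA := aux_avg_lb n hn
      rw [← aux_avg_mul n hn] at hS
      have hq : ((Nat.nth Nat.Prime n : ℝ)) ^ 2 ≤ 4 * ((n : ℝ) + 1) ^ 3 := by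
        exact_mod_cast aux_prime_ub n hn
      have hn0 : (0 : ℝ) ≤ n := by positivity
      have hq2 : (Nat.nth Nat.Prime n : ℝ) ≤ (n + 1) * (2 * m + 1) := by
        apply le_of_sq_le_sq _ (by positivity)
        have h1 : 4 * ((n : ℝ) + 1) ≤ (2 * m + 1) ^ 2 := by nlinarith
        have h2 := mul_le_mul_of_nonneg_left h1 (sq_nonneg ((n : ℝ) + 1))
        nlinarith
      have hpos : (0 : ℝ) < n + 1 := by positivity
      push_cast at hS
      have h1 := mul_le_mul_of_nonneg_left hA hn0
      refine le_of_mul_le_mul_left ?_ hpos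
      rw [hS]
      nlinarith [sq_nonneg m]
  obtain ⟨i, hi1, hi2, hi3⟩ := hmain
  have hfin : {i : ℕ | 1 ≤ i ∧ avgPrime i ≤ (m + 1) ^ 2}.Finite := by
    refine (Set.finite_Iic ⌊(m + 1) ^ 2⌋₊).subset ?_
    rintro j ⟨hj1, hj2⟩
    exact Nat.le_floor ((aux_avg_lb j hj1).trans hj2)
  unfold avgPrimeCount
  rw [gt_iff_lt, Nat.card_coe_set_eq, Nat.card_coe_set_eq]
  refine Set.ncard_lt_ncard ?_ hfin
  rw [Set.ssubset_iff_of_subset]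
  · exact ⟨i, ⟨hi1, hi3⟩, fun h => absurd h.2 (by linarith)⟩
  · rintro j ⟨hj1, hj2⟩
    exact ⟨hj1, by nlinarith⟩
end
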